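/- arXiv:1403.6435 — 7 statements merged into one kernel-verified Lean document; each statement's English description precedes it below -/
import Mathlib

section
/- Let a, b, d, m, n, k be natural numbers with d > 0, m ≥ 1, n ≥ 1 and k > m. Let A = {a + r·d : 0 ≤ r < m} and B = {b + s·(k·d) : 0 ≤ s < n}. Then the sumset A + B has exactly m·n elements, i.e., |A + B| = |A| · |B|. -/
open Finset Pointwise

/-!
A sum `(a + r * d) + (b + s * (k * d))` equals `a + b + d * (r + k * s)`. Since `r < m < k`, the
numbers `r` and `s` are the remainder and the quotient of `r + k * s` on division by `k`, so the
sum determines the pair `(r, s)`. Hence addition is injective on `A × B`, which is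
`Finset.card_add_iff`, and both progressions have as many elements as indices.
-/

/-- **Theorem (set-theoretic core of: first kind semi-arithmetic IASIs are strong).**
Let `A = {a + r·d : 0 ≤ r < m}` and `B = {b + s·(k·d) : 0 ≤ s < n}` be AP-sets
with `d > 0`, `m ≥ 1`, `n ≥ 1` and `k > m`. Then `|A + B| = m·n = |A| ⬝ |B|`. -/
theorem card_sumset_ap_sets (a b d m n k : ℕ) (hd : 0 < d)
    (hm : 1 ≤ m) (hn : 1 ≤ n) (hk : m < k) :
    ((range m).image (fun r => a + r * d) +
        (range n).image (fun s => b + s * (k * d))).card = m * n ∧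
    ((range m).image (fun r => a + r * d) +
        (range n).image (fun s => b + s * (k * d))).card =
      ((range m).image (fun r => a + r * d)).card *
        ((range n).image (fun s => b + s * (k * d))).card := by
  have hkd : 0 < k * d := Nat.mul_pos (by lia) hd
  have hA : ((range m).image (fun r => a + r * d)).card = m := by
    rw [card_image_of_injective, card_range]
    intro x y h
    exact Nat.eq_of_mul_eq_mul_right hd (Nat.add_left_cancel h)
  have hB : ((range n).image (fun s => b + s * (k * d))).card = n := by
    rw [card_image_of_injective, card_range]
    intro x y h
    exact Nat.eq_of_mul_eq_mul_right hkd (Nat.add_left_cancel h)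
  have key : ((range m).image (fun r => a + r * d) +
        (range n).image (fun s => b + s * (k * d))).card =
      ((range m).image (fun r => a + r * d)).card *
        ((range n).image (fun s => b + s * (k * d))).card := by
    rw [card_add_iff]
    rintro ⟨x, y⟩ hxy ⟨x', y'⟩ hxy' h
    simp only [Set.mem_prod, mem_coe, mem_image, mem_range] at hxy hxy'
    obtain ⟨⟨r, hr, rfl⟩, s, -, rfl⟩ := hxy
    obtain ⟨⟨r', hr', rfl⟩, s', -, rfl⟩ := hxy'
    have h1 : r + k * s = r' + k * s' := by
      apply Nat.eq_of_mul_eq_mul_left hd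
      dsimp only at h
      linarith
    have h2 : r = r' := by
      have := congrArg (· % k) h1
      simpa [Nat.add_mul_mod_self_left, Nat.mod_eq_of_lt (hr.trans hk),
        Nat.mod_eq_of_lt (hr'.trans hk)] using this
    subst h2
    have h3 : s = s' :=
      Nat.eq_of_mul_eq_mul_left (Nat.zero_lt_of_lt hk) (Nat.add_left_cancel h1)
    rw [h3]
  exact ⟨by rw [key, hA, hB], key⟩
end

section
/- Let G be a finite simple graph and let f be a first kind semi-arithmetic IASI of G: f assigns to each vertex v an AP-set f(v) = {a(v) + r·d(v) : 0 ≤ r < m(v)} with d(v) > 0 and m(v) ≥ 3, f is injective on vertices, the induced edge map f⁺(uv) = f(u) + f(v) is injective on edges, and for every edge uv there is a positive integer k such that either d(v) = k·d(u) with k > |f(u)|, or d(u) = k·d(v) with k > |f(v)|. Then f is a strong IASI of G: for every edge uv of G, |f(u) + f(v)| = |f(u)| · |f(v)|. -/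
open Finset Pointwise

/-!
A sum `A + B` has `|A| * |B|` elements exactly when addition is injective on `A × B`.
If `A` has step `d` and `B` has step `k * d` with `|A| < k`, then an element of `A + B` is
`(a + b) + (r + s * k) * d` with `r < |A| < k`, and `r`, `s` are recovered as the remainder
and the quotient of `r + s * k` on division by `k`. So addition is injective, and the
theorem is this fact applied to each edge, up to exchanging its endpoints.
-/

/-- Two arithmetic progressions whose steps are in ratio `k`, where `k` exceeds the size of
the one with the smaller step, have a sumset of maximal size. -/
lemma card_add_of_step_eq_mul {a b d k m n : ℕ} (hd : 0 < d) {A B : Finset ℕ}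
    (hA : A = (range m).image (fun r => a + r * d))
    (hB : B = (range n).image (fun s => b + s * (k * d))) (hk : A.card < k) :
    (A + B).card = A.card * B.card := by
  have hcard : A.card = m := by
    rw [hA, card_image_of_injective, card_range]
    intro r r' h
    exact Nat.eq_of_mul_eq_mul_right hd (Nat.add_left_cancel h)
  rw [hcard] at hk
  rw [card_add_iff]
  rintro ⟨x, y⟩ hxy ⟨x', y'⟩ hxy' h
  simp only [hA, hB, Set.mem_prod, mem_coe, mem_image, mem_range] at hxy hxy'
  obtain ⟨⟨r, hr, rfl⟩, s, -, rfl⟩ := hxy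
  obtain ⟨⟨r', hr', rfl⟩, s', -, rfl⟩ := hxy'
  have key : r + s * k = r' + s' * k := by
    apply Nat.eq_of_mul_eq_mul_right hd
    dsimp only at h
    linarith
  have hrr : r = r' := by
    have := congrArg (· % k) key
    simpa [Nat.mod_eq_of_lt (hr.trans hk), Nat.mod_eq_of_lt (hr'.trans hk)] using this
  subst hrr
  have hss : s = s' :=
    Nat.eq_of_mul_eq_mul_right (by omega : 0 < k) (Nat.add_left_cancel key)
  rw [hss]

/-- **Theorem (first kind semi-arithmetic IASIs are strong).**
Let `f` be a first kind semi-arithmetic IASI of a finite simple graph `G`: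
each vertex label `f v` is the AP-set `{a v + r ⬝ d v : 0 ≤ r < m v}` with
`d v > 0` and `m v ≥ 3`, `f` is injective, the induced edge map
`f⁺(uv) = f u + f v` is injective on edges, and for each edge `uv` the
deterministic index of one endpoint is `k` times that of the other for some
`k` exceeding the cardinality of the latter's label.  Then `f` is a strong
IASI: `|f u + f v| = |f u| ⬝ |f v|` for every edge `uv`. -/
theorem firstKindSemiArithmetic_isStrong {V : Type*} [Fintype V]
    (G : SimpleGraph V) (f : V → Finset ℕ) (a d m : V → ℕ)
    (hd : ∀ v, 0 < d v) (hm : ∀ v, 3 ≤ m v)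
    (hf : ∀ v, f v = (range (m v)).image (fun r => a v + r * d v))
    (hinj : Function.Injective f)
    (hedge : ∀ u v x y, G.Adj u v → G.Adj x y →
      f u + f v = f x + f y → s(u, v) = s(x, y))
    (hfirst : ∀ u v, G.Adj u v → ∃ k : ℕ,
      (d v = k * d u ∧ (f u).card < k) ∨ (d u = k * d v ∧ (f v).card < k)) :
    ∀ u v, G.Adj u v → (f u + f v).card = (f u).card * (f v).card := by
  intro u v huv
  obtain ⟨k, ⟨hk, hlt⟩ | ⟨hk, hlt⟩⟩ := hfirst u v huv
  · exact card_add_of_step_eq_mul (hd u) (hf u) (by rw [hf v, hk]) hlt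
  · rw [add_comm, mul_comm]
    exact card_add_of_step_eq_mul (hd v) (hf v) (by rw [hf u, hk]) hlt
end

section
/- Let G be a finite simple graph and let f be a first kind semi-arithmetic IASI of G (so, in particular, every vertex label f(v) has at least three elements). Then no edge of G has a prime set-indexing number: for every edge uv, |f(u) + f(v)| is not a prime number. -/
/-!
On an edge whose labels have common differences `d` and `k * d`, with `k` larger than the number
`m` of elements of the first label, a sum has the form `(a + b) + (r + s * k) * d` with `r < m < k`.
By uniqueness of base-`k` division with remainder it determines `r` and `s`, so all pairwise sums
are distinct and `|f u + f v| = |f u| * |f v|` (`card_add_of_ratio_gt`), a product of two numbers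
that are at least three.
-/

open Finset Pointwise

theorem card_progression (a d m : ℕ) (hd : 0 < d) :
    ((range m).image (fun r => a + r * d)).card = m := by
  rw [card_image_of_injective, card_range]
  intro r s h
  exact Nat.eq_of_mul_eq_mul_right hd (Nat.add_left_cancel h)

/-- Two progressions, the second of whose common differences is `k` times the first, have pairwise
distinct sums as soon as `k` is at least the length `m` of the first. -/
theorem card_add_of_ratio_gt (a b d k m n : ℕ) (hd : 0 < d) (hk : 0 < k) (hmk : m ≤ k) :
    ((range m).image (fun r => a + r * d) + (range n).image (fun s => b + s * (k * d))).card
      = m * n := by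
  have key : Set.InjOn (fun p : ℕ × ℕ => p.1 + p.2)
      (((range m).image (fun r => a + r * d) : Finset ℕ) ×ˢ
        ((range n).image (fun s => b + s * (k * d)) : Finset ℕ) : Set (ℕ × ℕ)) := by
    rintro ⟨x, y⟩ hxy ⟨x', y'⟩ hxy' h
    simp only [Set.mem_prod, mem_coe, mem_image, mem_range] at hxy hxy'
    obtain ⟨⟨r, hr, rfl⟩, s, -, rfl⟩ := hxy
    obtain ⟨⟨r', hr', rfl⟩, s', -, rfl⟩ := hxy'
    have h1 : (r + k * s) * d = (r' + k * s') * d := by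
      dsimp only at h
      linarith
    have h2 : r + k * s = r' + k * s' := Nat.eq_of_mul_eq_mul_right hd h1
    have hrr : r = r' := by
      have := congrArg (· % k) h2
      simpa [Nat.add_mul_mod_self_left, Nat.mod_eq_of_lt (hr.trans_le hmk),
        Nat.mod_eq_of_lt (hr'.trans_le hmk)] using this
    subst hrr
    have hss : s = s' := Nat.eq_of_mul_eq_mul_left hk (Nat.add_left_cancel h2)
    rw [hss]
  rw [card_add_iff.mpr key, card_progression a d m hd,
    card_progression b (k * d) n (Nat.mul_pos hk hd)]

/-- **Proposition (no prime set-indexing numbers).**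
If `f` is a first kind semi-arithmetic IASI of a finite simple graph `G`
(in particular every vertex label has at least three elements), then no edge
of `G` has a prime set-indexing number: for every edge `uv`, the cardinality
`|f u + f v|` is not prime. -/
theorem firstKindSemiArithmetic_no_prime_setIndexingNumber {V : Type*} [Fintype V]
    (G : SimpleGraph V) (f : V → Finset ℕ) (a d m : V → ℕ)
    (hd : ∀ v, 0 < d v) (hm : ∀ v, 3 ≤ m v)
    (hf : ∀ v, f v = (range (m v)).image (fun r => a v + r * d v))
    (hinj : Function.Injective f)
    (hedge : ∀ u v x y, G.Adj u v → G.Adj x y →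
      f u + f v = f x + f y → s(u, v) = s(x, y))
    (hfirst : ∀ u v, G.Adj u v → ∃ k : ℕ,
      (d v = k * d u ∧ (f u).card < k) ∨ (d u = k * d v ∧ (f v).card < k)) :
    ∀ u v, G.Adj u v → ¬ Nat.Prime (f u + f v).card := by
  -- The edge condition is symmetric, so it suffices to treat one of its two cases.
  have main : ∀ u v k, d v = k * d u → (f u).card < k → ¬ Nat.Prime (f u + f v).card := by
    intro u v k hk hlt
    rw [hf u, card_progression _ _ _ (hd u)] at hlt
    rw [hf u, hf v, hk,
      card_add_of_ratio_gt _ _ _ _ _ _ (hd u) (Nat.zero_lt_of_lt hlt) hlt.le]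
    have hu := hm u
    have hv := hm v
    exact Nat.not_prime_mul (by omega) (by omega)
  intro u v huv
  obtain ⟨k, ⟨hk, hlt⟩ | ⟨hk, hlt⟩⟩ := hfirst u v huv
  · exact main u v k hk hlt
  · rw [add_comm]
    exact main v u k hk hlt
end

section
/- Let G be a finite simple graph and let f be a first kind semi-arithmetic IASI of G such that V(G) is n-uniformly set-indexed, i.e., |f(v)| = n for every vertex v. Then f is an n²-uniform IASI: |f(u) + f(v)| = n² for every edge uv. -/
/-!
Up to translation and scaling, an edge label is `{r + q * k : r < n, q < n}`, where `k` is the ratio of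
the two common differences. As `n < k`, the pair `(r, q)` is recovered from `r + q * k` as its
remainder and quotient modulo `k`, so the `n * n` sums of pairs are distinct.
-/

open Finset Pointwise

/-- Addition is injective on the product of two progressions when the second common difference is
`k` times the first and the first progression has at most `k` terms. -/
theorem card_add_progressions (a b d k m l : ℕ) (hd : 0 < d) (hk : m ≤ k) :
    ((range m).image (fun r => a + r * d) + (range l).image (fun q => b + q * (k * d))).card
      = ((range m).image (fun r => a + r * d)).card
        * ((range l).image (fun q => b + q * (k * d))).card := by
  rw [Finset.card_add_iff]
  rintro ⟨x, y⟩ hxy ⟨x', y'⟩ hxy' h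
  simp only [Set.mem_prod, coe_image, Set.mem_image, mem_coe, mem_range] at hxy hxy'
  obtain ⟨⟨r, hr, rfl⟩, ⟨q, -, rfl⟩⟩ := hxy
  obtain ⟨⟨r', hr', rfl⟩, ⟨q', -, rfl⟩⟩ := hxy'
  have h1 : (r + k * q) * d = (r' + k * q') * d := by
    simp only at h
    linarith
  have h2 : r + k * q = r' + k * q' := Nat.eq_of_mul_eq_mul_right hd h1
  have hrr : r = r' := by
    have := congrArg (· % k) h2
    simpa [Nat.add_mul_mod_self_left, Nat.mod_eq_of_lt (hr.trans_le hk),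
      Nat.mod_eq_of_lt (hr'.trans_le hk)] using this
  subst hrr
  have hqq : q = q' := Nat.eq_of_mul_eq_mul_left (by omega) (Nat.add_left_cancel h2)
  rw [hqq]

/-- **Theorem (uniform first kind semi-arithmetic IASIs; sufficiency, uniform case).**
Let `f` be a first kind semi-arithmetic IASI of a finite simple graph `G`
whose vertex set is `n`-uniformly set-indexed: `|f v| = n` for every vertex
`v`.  Then `f` is an `n²`-uniform IASI: `|f u + f v| = n²` for every edge
`uv`. -/
theorem firstKindSemiArithmetic_uniformlySetIndexed_is_sq_uniform
    {V : Type*} [Fintype V] (G : SimpleGraph V)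
    (f : V → Finset ℕ) (a d m : V → ℕ)
    (hd : ∀ v, 0 < d v) (hm : ∀ v, 3 ≤ m v)
    (hf : ∀ v, f v = (range (m v)).image (fun r => a v + r * d v))
    (hinj : Function.Injective f)
    (hedge : ∀ u v x y, G.Adj u v → G.Adj x y →
      f u + f v = f x + f y → s(u, v) = s(x, y))
    (hfirst : ∀ u v, G.Adj u v → ∃ k : ℕ,
      (d v = k * d u ∧ (f u).card < k) ∨ (d u = k * d v ∧ (f v).card < k))
    (n : ℕ) (hn : ∀ v, (f v).card = n) :
    ∀ u v, G.Adj u v → (f u + f v).card = n ^ 2 := by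
  have hmn : ∀ v, m v = n := by
    intro v
    rw [← hn v, hf v, card_image_of_injective, card_range]
    intro r r' h
    exact Nat.eq_of_mul_eq_mul_right (hd v) (Nat.add_left_cancel h)
  have key : ∀ u v k, d v = k * d u → (f u).card < k → (f u + f v).card = n ^ 2 := by
    intro u v k hk hlt
    have hle : m u ≤ k := by
      rw [hn u] at hlt
      rw [hmn u]
      exact hlt.le
    have := card_add_progressions (a u) (a v) (d u) k (m u) (m v) (hd u) hle
    rw [← hk, ← hf u, ← hf v, hn u, hn v] at this
    rw [this, sq]
  intro u v huv
  obtain ⟨k, ⟨h, hlt⟩ | ⟨h, hlt⟩⟩ := hfirst u v huv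
  · exact key u v k h hlt
  · rw [add_comm]
    exact key v u k h hlt
end

section
/- Let G be a finite bipartite simple graph without isolated vertices and let m, n be integers with m, n ≥ 3. Then G admits an (m·n)-uniform first kind semi-arithmetic IASI: there is an injective function f from V(G) to finite sets of nonnegative integers such that every vertex label is an AP-set with at least three elements, the induced edge map f⁺(uv) = f(u) + f(v) is injective on edges, for every edge the common difference of one endpoint's label is k times that of the other for some integer k exceeding the cardinality of the latter label, and |f(u) + f(v)| = m·n for every edge uv. -/
/-! Let `X` be one side of the bipartition and let `e` number the `N` vertices by `0, …, N - 1`.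
A vertex of `X` gets `m` consecutive integers starting at `e v`; a vertex outside `X` gets an
`n`-term progression of difference `m + 1` starting at `N * (e v + 1)`. An edge label is then a sum
of `{0, …, m - 1}` and `{0, m + 1, …, (n - 1) * (m + 1)}`, translated, in which all `m * n` sums are
distinct by division with remainder by `m + 1` (`card_ap_add_ap`). The first terms are the least
elements of the labels, so they can be read off from the labels; they are distinct, and the least
element `e u + N * (e v + 1)` of an edge label determines `e u` and `e v` by division by `N`. -/


open Finset Pointwise

/-- The `m`-term arithmetic progression with first term `a` and difference `d`. -/
def ap (m a d : ℕ) : Finset ℕ := (range m).image (fun r => a + r * d)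

lemma isLeast_ap {m a d : ℕ} (hm : 0 < m) : IsLeast (ap m a d : Set ℕ) a := by
  constructor
  · simp only [ap, Finset.coe_image, Set.mem_image]
    exact ⟨0, by simpa using hm, by simp⟩
  · intro x hx
    simp only [ap, Finset.coe_image, Set.mem_image] at hx
    obtain ⟨r, -, rfl⟩ := hx
    exact Nat.le_add_right _ _

lemma card_ap {m a d : ℕ} (hd : 0 < d) : (ap m a d).card = m := by
  rw [ap, Finset.card_image_of_injective, card_range]
  intro r s h
  exact Nat.eq_of_mul_eq_mul_right hd (Nat.add_left_cancel h)

lemma isLeast_add {A B : Finset ℕ} {a b : ℕ} (hA : IsLeast (A : Set ℕ) a)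
    (hB : IsLeast (B : Set ℕ) b) : IsLeast ((A + B : Finset ℕ) : Set ℕ) (a + b) := by
  constructor
  · exact Finset.add_mem_add hA.1 hB.1
  · intro x hx
    obtain ⟨y, hy, z, hz, rfl⟩ := Finset.mem_add.1 hx
    exact add_le_add (hA.2 hy) (hB.2 hz)

/-- Uniqueness of division with remainder, in additive form. -/
lemma divMod_unique {k i i' j j' : ℕ} (hi : i < k) (hi' : i' < k)
    (h : i + k * j = i' + k * j') : i = i' ∧ j = j' := by
  have hk : 0 < k := by omega
  constructor
  · simpa [Nat.add_mul_mod_self_left, Nat.mod_eq_of_lt hi, Nat.mod_eq_of_lt hi'] using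
      congrArg (· % k) h
  · simpa [Nat.add_mul_div_left _ _ hk, Nat.div_eq_of_lt hi, Nat.div_eq_of_lt hi'] using
      congrArg (· / k) h

/-- A run of `m` consecutive integers and an `n`-term progression of difference `m + 1` have no
coinciding sums. -/
lemma card_ap_add_ap (m n a b : ℕ) : (ap m a 1 + ap n b (m + 1)).card = m * n := by
  have key : (ap m a 1 + ap n b (m + 1)).card = (ap m a 1).card * (ap n b (m + 1)).card := by
    rw [Finset.card_add_iff]
    rintro ⟨x, y⟩ hxy ⟨x', y'⟩ hxy' h
    simp only [ap, Finset.coe_image, Set.mem_prod, Set.mem_image, Finset.coe_range,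
      Set.mem_Iio] at hxy hxy' h
    obtain ⟨⟨i, hi, rfl⟩, j, -, rfl⟩ := hxy
    obtain ⟨⟨i', hi', rfl⟩, j', -, rfl⟩ := hxy'
    obtain ⟨rfl, rfl⟩ := divMod_unique (k := m + 1) (i := i) (i' := i') (j := j) (j' := j')
      (by omega) (by omega) (by linarith)
    rfl
  rw [key, card_ap one_pos, card_ap (Nat.succ_pos m)]

/-- **Theorem (uniform first kind semi-arithmetic IASIs; sufficiency, bipartite case).**
Every finite bipartite simple graph `G` without isolated vertices admits, for
any `m, n ≥ 3`, an `(m·n)`-uniform first kind semi-arithmetic IASI: an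
injective labeling `f` of the vertices by AP-sets with at least three
elements, whose induced edge map is injective, such that for each edge the
common difference of one endpoint's label is `k` times that of the other with
`k` exceeding the cardinality of the latter label, and every edge label has
cardinality `m·n`. -/
theorem bipartite_admits_uniform_firstKindSemiArithmeticIASI
    {V : Type*} [Fintype V] (G : SimpleGraph V)
    (hbip : ∃ X : Set V, ∀ u v, G.Adj u v → (u ∈ X ↔ v ∉ X))
    (hnoiso : ∀ v : V, ∃ u, G.Adj v u)
    (m n : ℕ) (hm : 3 ≤ m) (hn : 3 ≤ n) :
    ∃ (f : V → Finset ℕ) (a d mv : V → ℕ),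
      Function.Injective f ∧
      (∀ v, 0 < d v ∧ 3 ≤ mv v ∧
        f v = (range (mv v)).image (fun r => a v + r * d v)) ∧
      (∀ u v x y, G.Adj u v → G.Adj x y →
        f u + f v = f x + f y → s(u, v) = s(x, y)) ∧
      (∀ u v, G.Adj u v → ∃ k : ℕ,
        (d v = k * d u ∧ (f u).card < k) ∨ (d u = k * d v ∧ (f v).card < k)) ∧
      (∀ u v, G.Adj u v → (f u + f v).card = m * n) := by
  classical
  obtain ⟨X, hX⟩ := hbip
  let N := Fintype.card V
  let e : V → ℕ := fun v => (Fintype.equivFin V v : ℕ)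
  have he : ∀ v, e v < N := fun v => (Fintype.equivFin V v).isLt
  have einj : Function.Injective e :=
    fun u v h => (Fintype.equivFin V).injective (Fin.ext h)
  let a : V → ℕ := fun v => if v ∈ X then e v else N * (e v + 1)
  let d : V → ℕ := fun v => if v ∈ X then 1 else m + 1
  let mv : V → ℕ := fun v => if v ∈ X then m else n
  let f : V → Finset ℕ := fun v => ap (mv v) (a v) (d v)
  have aX : ∀ v, v ∈ X → a v = e v := fun v hv => if_pos hv
  have aY : ∀ v, v ∉ X → a v = N * (e v + 1) := fun v hv => if_neg hv
  have fX : ∀ v, v ∈ X → f v = ap m (a v) 1 := fun v hv => by simp [f, mv, d, hv]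
  have fY : ∀ v, v ∉ X → f v = ap n (a v) (m + 1) := fun v hv => by simp [f, mv, d, hv]
  have hmv : ∀ v, 3 ≤ mv v := fun v => by dsimp only [mv]; split_ifs <;> assumption
  have hleast : ∀ v, IsLeast (f v : Set ℕ) (a v) :=
    fun v => isLeast_ap (by have := hmv v; omega)
  have hlt : ∀ u v, u ∈ X → v ∉ X → a u < a v := by
    intro u v hu hv
    rw [aX u hu, aY v hv]
    exact (he u).trans_le (Nat.le_mul_of_pos_right _ (Nat.succ_pos _))
  have ainj : Function.Injective a := by
    intro u v h
    by_cases hu : u ∈ X <;> by_cases hv : v ∈ X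
    · rw [aX u hu, aX v hv] at h
      exact einj h
    · exact absurd h (hlt u v hu hv).ne
    · exact absurd h (hlt v u hv hu).ne'
    · rw [aY u hu, aY v hv] at h
      have hN : 0 < N := (Nat.zero_le _).trans_lt (he u)
      exact einj (Nat.succ_injective (Nat.eq_of_mul_eq_mul_left hN h))
  -- Edges oriented from `X` to its complement are determined by their labels.
  have hedge : ∀ u v x y, u ∈ X → v ∉ X → x ∈ X → y ∉ X →
      f u + f v = f x + f y → s(u, v) = s(x, y) := by
    intro u v x y hu hv hx hy h
    have h1 := isLeast_add (hleast u) (hleast v)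
    rw [h] at h1
    have h2 := h1.unique (isLeast_add (hleast x) (hleast y))
    rw [aX u hu, aY v hv, aX x hx, aY y hy] at h2
    obtain ⟨h3, h4⟩ := divMod_unique (he u) (he x) h2
    rw [einj h3, einj (Nat.succ_injective h4)]
  -- Every edge can be oriented from `X` to its complement.
  have horient : ∀ u v, G.Adj u v → (u ∈ X ∧ v ∉ X) ∨ (v ∈ X ∧ u ∉ X) := by
    intro u v h
    have := hX u v h
    tauto
  have hk : ∀ u v, u ∈ X → v ∉ X → d v = (m + 1) * d u ∧ (f u).card < m + 1 := by
    intro u v hu hv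
    rw [fX u hu, card_ap one_pos]
    simp [d, hu, hv]
  have hcard : ∀ u v, u ∈ X → v ∉ X → (f u + f v).card = m * n := by
    intro u v hu hv
    rw [fX u hu, fY v hv, card_ap_add_ap]
  refine ⟨f, a, d, mv, ?_, ?_, ?_, ?_, ?_⟩
  · intro u v h
    have h1 := hleast u
    rw [h] at h1
    exact ainj (h1.unique (hleast v))
  · intro v
    refine ⟨?_, hmv v, rfl⟩
    dsimp only [d]
    split_ifs <;> omega
  · intro u v x y huv hxy h
    rcases horient u v huv with ⟨hu, hv⟩ | ⟨hv, hu⟩ <;>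
      rcases horient x y hxy with ⟨hx, hy⟩ | ⟨hy, hx⟩
    · exact hedge u v x y hu hv hx hy h
    · rw [Sym2.eq_swap (a := x)]
      exact hedge u v y x hu hv hy hx (h.trans (add_comm _ _))
    · rw [Sym2.eq_swap (a := u)]
      exact hedge v u x y hv hu hx hy ((add_comm _ _).trans h)
    · rw [Sym2.eq_swap (a := u), Sym2.eq_swap (a := x)]
      exact hedge v u y x hv hu hy hx ((add_comm _ _).trans (h.trans (add_comm _ _)))
  · intro u v huv
    rcases horient u v huv with ⟨hu, hv⟩ | ⟨hv, hu⟩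
    · exact ⟨m + 1, Or.inl (hk u v hu hv)⟩
    · exact ⟨m + 1, Or.inr (hk v u hv hu)⟩
  · intro u v huv
    rcases horient u v huv with ⟨hu, hv⟩ | ⟨hv, hu⟩
    · exact hcard u v hu hv
    · rw [add_comm]
      exact hcard v u hv hu
end

section
/- Let a, b, d, m, n, k be natural numbers with d > 0, m ≥ 3, n ≥ 2 and k > m. Let A = {a + r·d : 0 ≤ r < m} and B = {b + s·(k·d) : 0 ≤ s < n}. Then the sumset A + B is not an AP-set: the elements of A + B, listed in increasing order, do not form an arithmetic progression. -/
/-!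
An AP-set with common difference `e` is closed under translation by a multiple of `e`, as long as
the translate does not exceed some element of the set. Put `S = A + B`. As `a + b` and `a + b + d`
both lie in `S`, the number `d` is a multiple of `e`; so `a + b + m * d`, the translate by `d` of
`a + b + (m - 1) * d ∈ S`, which is less than `a + b + k * d ∈ S`, would lie in `S`. But `m` is not
of the form `r + s * k` with `r < m`, because `m < k`.
-/

open Finset Pointwise

/-- A finite set of nonnegative integers is an AP-set if its elements, listed
in increasing order, form an arithmetic progression with positive common
difference. -/
def IsAPSet (S : Finset ℕ) : Prop :=
  ∃ c e : ℕ, 0 < e ∧ S = (range S.card).image (fun r => c + r * e)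

theorem IsAPSet.add_mem {S : Finset ℕ} (hS : IsAPSet S) {x d y z : ℕ} (hx : x ∈ S)
    (hxd : x + d ∈ S) (hy : y ∈ S) (hz : z ∈ S) (hyz : y + d ≤ z) : y + d ∈ S := by
  obtain ⟨c, e, he, h⟩ := hS
  have mem (w : ℕ) : w ∈ S ↔ ∃ i < S.card, c + i * e = w := by
    conv_lhs => rw [h]
    simp
  obtain ⟨i, -, rfl⟩ := (mem x).1 hx
  obtain ⟨j, -, hj⟩ := (mem _).1 hxd
  obtain ⟨p, -, rfl⟩ := (mem y).1 hy
  obtain ⟨q, hq, rfl⟩ := (mem z).1 hz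
  have hij : i ≤ j := Nat.le_of_mul_le_mul_right (by omega : i * e ≤ j * e) he
  obtain ⟨t, rfl⟩ := Nat.exists_eq_add_of_le hij
  obtain rfl : d = t * e := by
    rw [add_mul] at hj
    omega
  have hpq : p + t ≤ q :=
    Nat.le_of_mul_le_mul_right (by rw [add_mul]; omega : (p + t) * e ≤ q * e) he
  exact (mem _).2 ⟨p + t, by omega, by ring⟩

/-- **Lemma (edge labels of a first kind semi-arithmetic IASI are not AP-sets).**
Let `A = {a + r·d : 0 ≤ r < m}` and `B = {b + s·(k·d) : 0 ≤ s < n}` with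
`d > 0`, `m ≥ 3`, `n ≥ 2` and `k > m`.  Then the sumset `A + B` is not an
AP-set. -/
theorem sumset_not_APSet (a b d m n k : ℕ) (hd : 0 < d)
    (hm : 3 ≤ m) (hn : 2 ≤ n) (hk : m < k) :
    ¬ IsAPSet ((range m).image (fun r => a + r * d) +
        (range n).image (fun s => b + s * (k * d))) := by
  intro hS
  set S := (range m).image (fun r => a + r * d) +
    (range n).image (fun s => b + s * (k * d))
  have mem (t : ℕ) : a + b + t * d ∈ S ↔ ∃ r < m, ∃ s < n, r + s * k = t := by
    have key (r s : ℕ) : a + r * d + (b + s * (k * d)) = a + b + t * d ↔ r + s * k = t := by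
      rw [show a + r * d + (b + s * (k * d)) = a + b + (r + s * k) * d by ring,
        Nat.add_left_cancel_iff, Nat.mul_left_inj hd.ne']
    simp [S, Finset.mem_add, key]
  have h0 := (mem 0).2 ⟨0, by omega, 0, by omega, by simp⟩
  have h1 := (mem 1).2 ⟨1, by omega, 0, by omega, by simp⟩
  have hm1 := (mem (m - 1)).2 ⟨m - 1, by omega, 0, by omega, by simp⟩
  have hk1 := (mem k).2 ⟨0, by omega, 1, by omega, by simp⟩
  have hmd : a + b + (m - 1) * d + d = a + b + m * d := by
    obtain ⟨m', rfl⟩ := Nat.exists_eq_add_of_le' (show 1 ≤ m by omega)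
    rw [Nat.add_sub_cancel]
    ring
  have hle : a + b + (m - 1) * d + d ≤ a + b + k * d := by
    rw [hmd]
    gcongr
  have hmem := hS.add_mem h0 (by simpa using h1) hm1 hk1 hle
  rw [hmd] at hmem
  obtain ⟨r, hr, s, -, hrs⟩ := (mem m).1 hmem
  rcases Nat.eq_zero_or_pos s with rfl | hs
  · omega
  · have := Nat.le_mul_of_pos_left k hs
    omega
end

section
/- Let a, b, d₁, d₂, m, n be natural numbers with d₁ > 0, m ≥ 3, n ≥ 3, and d₂ = k·d₁ for some integer k > m. Let A = {a + r·d₁ : 0 ≤ r < m} and B = {b + s·d₂ : 0 ≤ s < n}. Then |A + B| = m·n and m·n is not a prime number; in particular the set-indexing number of an edge joining two vertices labeled A and B under a first kind semi-arithmetic IASI is a composite number. -/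
/-!
An element of the sumset has the form `a + b + (r + k * s) * d₁` with `r < m < k`, so `r` and `s`
are the remainder and quotient of `r + k * s` by `k`. Hence addition is injective on the product
of the two progressions, and the sumset has `m * n` elements, a product of two factors exceeding 1.
-/

open Finset Pointwise

/-- **Theorem (set-indexing numbers under a first kind semi-arithmetic IASI
are composite).**  Let `A = {a + r·d₁ : 0 ≤ r < m}` and
`B = {b + s·d₂ : 0 ≤ s < n}` be AP-sets with `d₁ > 0`, `m ≥ 3`, `n ≥ 3` and
`d₂ = k·d₁` for some `k > m`.  Then `|A + B| = m·n`, and `m·n` is not prime;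
so the set-indexing number of an edge joining two vertices labeled `A` and `B`
under a first kind semi-arithmetic IASI is composite. -/
theorem setIndexingNumber_composite (a b d₁ d₂ m n k : ℕ)
    (hd₁ : 0 < d₁) (hm : 3 ≤ m) (hn : 3 ≤ n) (hk : m < k) (hd₂ : d₂ = k * d₁) :
    ((range m).image (fun r => a + r * d₁) +
        (range n).image (fun s => b + s * d₂)).card = m * n ∧
      ¬ Nat.Prime (m * n) := by
  subst hd₂
  refine ⟨?_, Nat.not_prime_mul (by omega) (by omega)⟩
  have hA : ((range m).image (fun r => a + r * d₁)).card = m := by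
    rw [card_image_of_injective, card_range]
    intro r r' h
    exact Nat.eq_of_mul_eq_mul_right hd₁ (Nat.add_left_cancel h)
  have hB : ((range n).image (fun s => b + s * (k * d₁))).card = n := by
    rw [card_image_of_injective, card_range]
    intro s s' h
    exact Nat.eq_of_mul_eq_mul_right (Nat.mul_pos (by omega) hd₁) (Nat.add_left_cancel h)
  have key : ((range m).image (fun r => a + r * d₁) +
      (range n).image (fun s => b + s * (k * d₁))).card =
      ((range m).image (fun r => a + r * d₁)).card *
        ((range n).image (fun s => b + s * (k * d₁))).card := by
    rw [card_add_iff]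
    rintro ⟨x, y⟩ hxy ⟨x', y'⟩ hxy' h
    simp only [Set.mem_prod, mem_coe, mem_image, mem_range] at hxy hxy' h
    obtain ⟨⟨r, hr, rfl⟩, s, -, rfl⟩ := hxy
    obtain ⟨⟨r', hr', rfl⟩, s', -, rfl⟩ := hxy'
    have e : r + k * s = r' + k * s' := by
      apply Nat.eq_of_mul_eq_mul_right hd₁
      linarith
    -- Since `r, r' < m < k`, both are remainders modulo `k`.
    have er : r = r' := by
      have := congrArg (· % k) e
      simpa [Nat.add_mul_mod_self_left, Nat.mod_eq_of_lt (hr.trans hk),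
        Nat.mod_eq_of_lt (hr'.trans hk)] using this
    subst er
    have es : s = s' := Nat.eq_of_mul_eq_mul_left (by omega) (Nat.add_left_cancel e)
    rw [es]
  rw [key, hA, hB]
end
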